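/- Let L_k be the k×k Jacobi matrix with diagonal entries a_j = 2j−1 for j = 1,…,k and off-diagonal entries b_j = j for j = 1,…,k−1, whose eigenvalues z_1^k,…,z_k^k are the zeros of the k-th Laguerre polynomial. Then the contracted zeros are asymptotically distributed according to the Marchenko–Pastur law: for every bounded continuous function φ : ℝ → ℝ, lim_{k→∞} (1/k) Σ_{j=1}^k φ(z_j^k / k) = (1/(2π)) ∫_0^4 φ(x) · (√(4x − x²)/x) dx. -/

import Mathlib

open Filter MeasureTheory

noncomputable section

/-- The `k × k` Jacobi (real symmetric tridiagonal) matrix with diagonal entries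
`a 0, …, a (k-1)` and sub/super-diagonal entries `b 0, …, b (k-2)` (0-indexed). -/
def jacobiMatrix (k : ℕ) (a b : ℕ → ℝ) : Matrix (Fin k) (Fin k) ℝ :=
  Matrix.of fun i j =>
    if (i : ℕ) = (j : ℕ) then a i
    else if (i : ℕ) + 1 = (j : ℕ) then b i
    else if (j : ℕ) + 1 = (i : ℕ) then b j
    else 0

theorem jacobiMatrix_isHermitian (k : ℕ) (a b : ℕ → ℝ) :
    (jacobiMatrix k a b).IsHermitian := by
  show _ = _
  ext i j
  simp only [Matrix.conjTranspose_apply, jacobiMatrix, Matrix.of_apply, star_trivial]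
  by_cases h1 : (i : ℕ) = (j : ℕ)
  · have h : i = j := Fin.ext h1
    subst h
    rfl
  · have h1' : ¬ (j : ℕ) = (i : ℕ) := fun h => h1 h.symm
    by_cases h2 : (i : ℕ) + 1 = (j : ℕ)
    · have h3 : ¬ (j : ℕ) + 1 = (i : ℕ) := by omega
      simp [h1, h1', h2, h3]
    · by_cases h3 : (j : ℕ) + 1 = (i : ℕ) <;> simp [h1, h1', h2, h3]

/-- `Trace[φ(J(a,b))] = ∑ⱼ φ(λⱼ)`, the sum of `φ` over the eigenvalues of the Jacobi matrix. -/
def jacobiTrace (k : ℕ) (a b : ℕ → ℝ) (φ : ℝ → ℝ) : ℝ :=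
  ∑ i, φ ((jacobiMatrix_isHermitian k a b).eigenvalues i)

/-- The class `𝒮`: small deviations `∑ᵢ |a_{i+1}^k − a_i^k| = o(k)` and entries in `[0,1]`. -/
def MemS (a : ℕ → ℕ → ℝ) : Prop :=
  ((fun k : ℕ => ∑ i ∈ Finset.range (k - 1), |a k (i + 1) - a k i|)
      =o[Filter.atTop] fun k : ℕ => (k : ℝ)) ∧
  ∀ k : ℕ, ∀ i < k, a k i ∈ Set.Icc (0 : ℝ) 1

/-- The class `𝒮′`: for every `δ ∈ (0,1)`, `∑ᵢ |a_{i+1}^k − a_i^k| = O(k^{1−δ})`, and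
`maxᵢ |a_i^k| = O(log k)`. -/
def MemS' (a : ℕ → ℕ → ℝ) : Prop :=
  (∀ δ : ℝ, δ ∈ Set.Ioo (0 : ℝ) 1 →
    ((fun k : ℕ => ∑ i ∈ Finset.range (k - 1), |a k (i + 1) - a k i|)
        =O[Filter.atTop] fun k : ℕ => (k : ℝ) ^ (1 - δ))) ∧
  ∃ C : ℝ, ∀ᶠ k : ℕ in Filter.atTop, ∀ i < k, |a k i| ≤ C * Real.log k

/-- `μ`-distributed on `I² = [0,1]²`. -/
def MuDistributedI (a b : ℕ → ℕ → ℝ) (μ : Measure (ℝ × ℝ)) : Prop :=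
  ∀ ψ : ℝ × ℝ → ℝ, ContinuousOn ψ (Set.Icc (0 : ℝ) 1 ×ˢ Set.Icc (0 : ℝ) 1) →
    Filter.Tendsto (fun k : ℕ => (1 / (k : ℝ)) * ∑ j ∈ Finset.range k, ψ (a k j, b k j))
      Filter.atTop (nhds (∫ p, ψ p ∂μ))

/-- `μ`-distributed on `ℝ²` (test functions: bounded continuous). -/
def MuDistributedR (a b : ℕ → ℕ → ℝ) (μ : Measure (ℝ × ℝ)) : Prop :=
  ∀ ψ : ℝ × ℝ → ℝ, Continuous ψ → (∃ C : ℝ, ∀ p, |ψ p| ≤ C) →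
    Filter.Tendsto (fun k : ℕ => (1 / (k : ℝ)) * ∑ j ∈ Finset.range k, ψ (a k j, b k j))
      Filter.atTop (nhds (∫ p, ψ p ∂μ))

/-- Tightness via closed bounded rectangles. -/
def TightRect (μ : Measure (ℝ × ℝ)) : Prop :=
  ∀ ε : ℝ, 0 < ε → ∃ x₁ x₂ y₁ y₂ : ℝ,
    μ ((Set.Icc x₁ x₂ ×ˢ Set.Icc y₁ y₂)ᶜ) < ENNReal.ofReal ε

/-- Almost everywhere increasing sequence of vectors. -/
def AEIncreasing (a : ℕ → ℕ → ℝ) : Prop :=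
  Filter.Tendsto
    (fun k : ℕ => (((Finset.range (k - 1)).filter fun i => a k i ≤ a k (i + 1)).card : ℝ) / k)
    Filter.atTop (nhds 1)

/-- Almost everywhere decreasing sequence of vectors. -/
def AEDecreasing (a : ℕ → ℕ → ℝ) : Prop :=
  Filter.Tendsto
    (fun k : ℕ => (((Finset.range (k - 1)).filter fun i => a k (i + 1) ≤ a k i).card : ℝ) / k)
    Filter.atTop (nhds 1)

/-- Almost everywhere monotone sequence of vectors. -/
def AEMonotone (a : ℕ → ℕ → ℝ) : Prop :=
  AEIncreasing a ∨ AEDecreasing a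

open Polynomial in
/-- monic Laguerre polynomials -/
def lagP : ℕ → ℝ[X]
  | 0 => 1
  | 1 => X - 1
  | (n + 2) => (X - (2 * ((n : ℝ[X]) + 1) + 1)) * lagP (n + 1) - ((n : ℝ[X]) + 1) ^ 2 * lagP n

open Polynomial in
theorem lagP_succ (n : ℕ) :
    lagP (n + 1) = (X - (2 * (n : ℝ[X]) + 1)) * lagP n - (n : ℝ[X]) ^ 2 * lagP (n - 1) := by
  cases n with
  | zero => simp [lagP]
  | succ n => simp [lagP]

open Polynomial in
theorem lagP_deriv (n : ℕ) :
    (X * derivative (lagP n) = (n : ℝ[X]) * lagP n + (n : ℝ[X]) ^ 2 * lagP (n - 1)) ∧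
    (derivative (lagP n) = (n : ℝ[X]) * (lagP (n - 1) - derivative (lagP (n - 1)))) := by
  induction n with
  | zero => simp [lagP]
  | succ n ih =>
    obtain ⟨hA, hB⟩ := ih
    have hB' : derivative (lagP (n + 1)) =
        ((n : ℝ[X]) + 1) * (lagP n - derivative (lagP n)) := by
      rw [lagP_succ]
      simp only [derivative_sub, derivative_mul, derivative_X, derivative_add, derivative_natCast,
        derivative_one, derivative_pow, derivative_ofNat]
      push_cast
      linear_combination hA - (n : ℝ[X]) * hB
    refine ⟨?_, by simpa using hB'⟩
    rw [hB']
    have := lagP_succ n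
    simp only [Nat.add_sub_cancel]
    push_cast
    linear_combination -((n : ℝ[X]) + 1) * hA - ((n : ℝ[X]) + 1) * this

open Polynomial in
theorem lagP_ode (n : ℕ) :
    X * derivative (derivative (lagP n)) + (1 - X) * derivative (lagP n)
      + (n : ℝ[X]) * lagP n = 0 := by
  obtain ⟨hA, hB⟩ := lagP_deriv n
  have h := congrArg derivative hA
  simp only [derivative_mul, derivative_X, derivative_add, derivative_natCast,
        derivative_pow] at h
  linear_combination h + (n : ℝ[X]) * hB - hA

open Polynomial in
theorem lagP_monic (n : ℕ) : (lagP n).Monic ∧ (lagP n).natDegree = n := by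
  induction n using Nat.strong_induction_on with
  | _ n ih =>
    match n with
    | 0 => simp [lagP]
    | 1 =>
      have : (X - 1 : ℝ[X]) = X - C 1 := by simp
      simp only [lagP, this]
      exact ⟨monic_X_sub_C _, natDegree_X_sub_C _⟩
    | n + 2 =>
      obtain ⟨m1, d1⟩ := ih (n + 1) (by omega)
      obtain ⟨m0, d0⟩ := ih n (by omega)
      have e : lagP (n + 2) = (X - C (2 * ((n : ℝ) + 1) + 1)) * lagP (n + 1)
          - C (((n : ℝ) + 1) ^ 2) * lagP n := by
        simp only [lagP, map_add, map_mul, map_pow, map_one, C_eq_natCast, C_ofNat]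
      have mm : ((X - C (2 * ((n : ℝ) + 1) + 1)) * lagP (n + 1)).Monic :=
        (monic_X_sub_C _).mul m1
      have dm : ((X - C (2 * ((n : ℝ) + 1) + 1)) * lagP (n + 1)).natDegree = n + 2 := by
        rw [(monic_X_sub_C _).natDegree_mul m1, natDegree_X_sub_C, d1]; ring
      have dl : (C (((n : ℝ) + 1) ^ 2) * lagP n).degree <
          ((X - C (2 * ((n : ℝ) + 1) + 1)) * lagP (n + 1)).degree := by
        apply degree_lt_degree
        rw [dm]
        have := natDegree_C_mul_le (((n : ℝ) + 1) ^ 2) (lagP n)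
        omega
      rw [e]
      refine ⟨mm.sub_of_left dl, ?_⟩
      rw [natDegree_sub_eq_left_of_natDegree_lt, dm]
      rw [dm]
      have := natDegree_C_mul_le (((n : ℝ) + 1) ^ 2) (lagP n)
      omega

theorem jacobi_row (k : ℕ) (a b w : ℕ → ℝ) (hw : ∀ n, k ≤ n → w n = 0) (i : ℕ) (hi : i < k) :
    ∑ j : Fin k, jacobiMatrix k a b ⟨i, hi⟩ j * w j =
      a i * w i + b i * w (i + 1) + (if i = 0 then 0 else b (i - 1) * w (i - 1)) := by
  have h1 : ∀ j : Fin k, jacobiMatrix k a b ⟨i, hi⟩ j * w j =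
      (if (j : ℕ) = i then a i * w i else 0) + (if (j : ℕ) = i + 1 then b i * w (i + 1) else 0)
      + (if (j : ℕ) + 1 = i then b (i - 1) * w (i - 1) else 0) := by
    intro j
    simp only [jacobiMatrix, Matrix.of_apply]
    rcases lt_trichotomy (j : ℕ) i with h | h | h
    · by_cases h' : (j : ℕ) + 1 = i
      · have : i - 1 = (j : ℕ) := by omega
        rw [this]
        simp [h', show ¬ i = (j : ℕ) by omega, show ¬ (j : ℕ) = i by omega,
          show ¬ i + 1 = (j : ℕ) by omega, show ¬ (j : ℕ) = i + 1 by omega]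
      · simp [h', show ¬ i = (j : ℕ) by omega, show ¬ (j : ℕ) = i by omega,
          show ¬ i + 1 = (j : ℕ) by omega, show ¬ (j : ℕ) = i + 1 by omega]
    · simp [h]
    · by_cases h' : (j : ℕ) = i + 1
      · simp [h', show ¬ i + 1 + 1 = i by omega]
      · simp [h', show ¬ i = (j : ℕ) by omega, show ¬ (j : ℕ) = i by omega,
          show ¬ i + 1 = (j : ℕ) by omega, show ¬ (j : ℕ) + 1 = i by omega]
  rw [Finset.sum_congr rfl fun j _ => h1 j, Finset.sum_add_distrib, Finset.sum_add_distrib]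
  congr 1
  · congr 1
    · rw [Finset.sum_eq_single ⟨i, hi⟩]
      · simp
      · intro c _ hc
        have : ¬ (c : ℕ) = i := fun h => hc (Fin.ext h)
        simp [this]
      · simp
    · by_cases h : i + 1 < k
      · rw [Finset.sum_eq_single ⟨i + 1, h⟩]
        · simp
        · intro c _ hc
          have : ¬ (c : ℕ) = i + 1 := fun h => hc (Fin.ext h)
          simp [this]
        · simp
      · rw [hw (i + 1) (by omega)]; simp
  · rcases i with _ | i
    · simp
    · rw [Finset.sum_eq_single ⟨i, by omega⟩]
      · simp
      · intro c _ hc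
        have : ¬ (c : ℕ) = i := fun h => hc (Fin.ext h)
        simp [this]
      · simp

theorem eigvec_lag (k : ℕ) (w : ℕ → ℝ) (hw : ∀ n, k ≤ n → w n = 0) (z : ℝ)
    (h : (jacobiMatrix k (fun i => 2 * (i : ℝ) + 1) (fun i => (i : ℝ) + 1)).mulVec
      (fun j : Fin k => w j) = z • (fun j : Fin k => w j)) (n : ℕ) (hn : n ≤ k) :
    (n.factorial : ℝ) * w n = w 0 * (lagP n).eval z := by
  have row : ∀ i, i < k → ((i : ℝ) + 1) * w (i + 1) = (z - (2 * i + 1)) * w i - i * w (i - 1) := by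
    intro i hi
    have h2 := congrFun h ⟨i, hi⟩
    have h3 := jacobi_row k (fun i => 2 * (i : ℝ) + 1) (fun i => (i : ℝ) + 1) w hw i hi
    simp only [Matrix.mulVec, dotProduct, Pi.smul_apply, smul_eq_mul] at h2
    rw [h3] at h2
    rcases i with _ | i
    · simp at h2 ⊢
      linarith
    · simp at h2 ⊢
      linarith
  induction n using Nat.strong_induction_on with
  | _ n ih =>
    rcases n with _ | n
    · simp [lagP]
    · have r := row n (by omega)
      have i1 := ih n (by omega) (by omega)
      rw [lagP_succ]
      rw [Nat.factorial_succ]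
      simp only [Polynomial.eval_sub, Polynomial.eval_mul, Polynomial.eval_add, Polynomial.eval_pow,
        Polynomial.eval_X, Polynomial.eval_natCast, Polynomial.eval_one, Polynomial.eval_ofNat]
      push_cast
      rcases n with _ | n
      · simp at r i1 ⊢
        linear_combination r + (z - 1) * i1
      · have i0 := ih n (by omega) (by omega)
        rw [Nat.factorial_succ] at *
        simp only [Nat.add_sub_cancel] at *
        push_cast at *
        linear_combination ((n : ℝ) + 1) * (n.factorial : ℝ) * r + (z - (2 * ((n : ℝ) + 1) + 1)) * i1
          - ((n : ℝ) + 1) ^ 2 * i0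

abbrev lagEig (k : ℕ) : Fin k → ℝ :=
  (jacobiMatrix_isHermitian k (fun i => 2 * (i : ℝ) + 1) (fun i => (i : ℝ) + 1)).eigenvalues

theorem lagEig_vec (k : ℕ) (i : Fin k) : ∃ w : ℕ → ℝ, (∀ n, k ≤ n → w n = 0) ∧
    (∀ j : Fin k, w j = (jacobiMatrix_isHermitian k (fun i => 2 * (i : ℝ) + 1)
      (fun i => (i : ℝ) + 1)).eigenvectorBasis i j) ∧ w 0 ≠ 0 ∧
    ∀ n ≤ k, (n.factorial : ℝ) * w n = w 0 * (lagP n).eval (lagEig k i) := by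
  set hA := jacobiMatrix_isHermitian k (fun i => 2 * (i : ℝ) + 1) (fun i => (i : ℝ) + 1)
  let w : ℕ → ℝ := fun n => if h : n < k then hA.eigenvectorBasis i ⟨n, h⟩ else 0
  have hw : ∀ n, k ≤ n → w n = 0 := fun n hn => by simp [w, hn]
  have hw2 : ∀ j : Fin k, w j = hA.eigenvectorBasis i j := fun j => by simp [w]
  have hw3 : (fun j : Fin k => w j) = ⇑(hA.eigenvectorBasis i) := funext hw2
  have key := eigvec_lag k w hw (lagEig k i) (by
    rw [hw3]; exact hA.mulVec_eigenvectorBasis i)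
  refine ⟨w, hw, hw2, ?_, key⟩
  intro h0
  have hz : hA.eigenvectorBasis i = 0 := by
    ext j
    rw [← hw2 j]
    have := key j j.2.le
    rw [h0, zero_mul] at this
    have hf : (((j : ℕ).factorial : ℕ) : ℝ) ≠ 0 := by exact_mod_cast Nat.factorial_ne_zero _
    simpa [hf] using this
  have := hA.eigenvectorBasis.orthonormal.1 i
  rw [hz] at this
  simp at this

theorem lagEig_root (k : ℕ) (i : Fin k) : (lagP k).eval (lagEig k i) = 0 := by
  obtain ⟨w, hw, -, h0, h⟩ := lagEig_vec k i
  have := h k le_rfl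
  rw [hw k le_rfl, mul_zero] at this
  simpa [h0] using this.symm

theorem lagEig_inj (k : ℕ) : Function.Injective (lagEig k) := by
  intro i j hij
  by_contra hne
  obtain ⟨w, hw, hw2, h0, h⟩ := lagEig_vec k i
  obtain ⟨v, hv, hv2, g0, g⟩ := lagEig_vec k j
  set hA := jacobiMatrix_isHermitian k (fun i => 2 * (i : ℝ) + 1) (fun i => (i : ℝ) + 1)
  have hp : w 0 • hA.eigenvectorBasis j = v 0 • hA.eigenvectorBasis i := by
    ext l
    simp only [PiLp.smul_apply, smul_eq_mul]
    rw [← hw2, ← hv2]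
    have e1 := h l l.2.le
    have e2 := g l l.2.le
    rw [hij] at e1
    have hf : (((l : ℕ).factorial : ℕ) : ℝ) ≠ 0 := by exact_mod_cast Nat.factorial_ne_zero _
    apply mul_left_cancel₀ hf
    linear_combination w 0 * e2 - v 0 * e1
  have ho := hA.eigenvectorBasis.orthonormal.2 hne
  have hn := hA.eigenvectorBasis.orthonormal.1 i
  have := congrArg (fun x => inner ℝ (hA.eigenvectorBasis i) x) hp
  simp only [inner_smul_right, ho, real_inner_self_eq_norm_sq, hn] at this
  apply g0
  simpa using this.symm

open Polynomial in
theorem lagP_eq_prod (k : ℕ) : lagP k = ∏ i : Fin k, (X - C (lagEig k i)) := by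
  obtain ⟨m, d⟩ := lagP_monic k
  have hm2 : (∏ i : Fin k, (X - C (lagEig k i))).Monic :=
    monic_prod_of_monic _ _ fun i _ => monic_X_sub_C _
  have hd2 : (∏ i : Fin k, (X - C (lagEig k i))).degree = (k : WithBot ℕ) := by
    rw [degree_prod]; simp
  refine eq_of_degree_le_of_eval_index_eq (s := Finset.univ) (v := lagEig k)
    (lagEig_inj k).injOn ?_ ?_ ?_ ?_
  · rw [degree_eq_natDegree m.ne_zero, d]; simp
  · rw [degree_eq_natDegree m.ne_zero, d, hd2]
  · rw [m.leadingCoeff, hm2.leadingCoeff]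
  · intro i _
    rw [lagEig_root, eval_prod, Finset.prod_eq_zero (Finset.mem_univ i)]
    simp

theorem lagEig_bound (k : ℕ) (i : Fin k) : |lagEig k i| ≤ 4 * k := by
  set A := jacobiMatrix k (fun i => 2 * (i : ℝ) + 1) (fun i => (i : ℝ) + 1) with hAd
  have hA : A.IsHermitian :=
    jacobiMatrix_isHermitian k (fun i => 2 * (i : ℝ) + 1) (fun i => (i : ℝ) + 1)
  have hev : Module.End.HasEigenvalue (Matrix.toLin' A) (lagEig k i) := by
    apply Module.End.hasEigenvalue_of_hasEigenvector (x := ⇑(hA.eigenvectorBasis i))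
    refine ⟨Module.End.mem_eigenspace_iff.2 ?_, ?_⟩
    · rw [Matrix.toLin'_apply]; exact hA.mulVec_eigenvectorBasis i
    · intro h
      have : hA.eigenvectorBasis i = 0 := by
        ext j; simpa using congrFun h j
      have h1 := hA.eigenvectorBasis.orthonormal.1 i
      rw [this] at h1
      simp at h1
  obtain ⟨r, hr⟩ := eigenvalue_mem_ball hev
  have hnn : ∀ j, ‖A r j‖ = A r j := by
    intro j
    rw [Real.norm_eq_abs, abs_of_nonneg]
    simp only [hAd, jacobiMatrix, Matrix.of_apply]
    split_ifs <;> positivity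
  have hd : A r r = 2 * (r : ℝ) + 1 := by simp [hAd, jacobiMatrix]
  simp only [hnn] at hr
  rw [Finset.sum_erase_eq_sub (Finset.mem_univ r), hd, Metric.mem_closedBall, Real.dist_eq] at hr
  have hs := jacobi_row k (fun i => 2 * (i : ℝ) + 1) (fun i => (i : ℝ) + 1)
    (fun n => if n < k then 1 else 0) (fun n hn => by simp [hn]) r r.2
  have hsum : ∑ j, A r j ≤ 4 * (r : ℝ) + 2 := by
    have e : ∑ j, A r j = ∑ j : Fin k, A r j * (if (j : ℕ) < k then 1 else 0) := by simp
    rw [e, hs]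
    have hr0 : (0 : ℝ) ≤ r := by positivity
    rcases hrr : (r : ℕ) with _ | n
    · simp [hrr] at *
      split_ifs <;> norm_num
    · rw [hrr] at hr0
      have : n < k := by omega
      have : n + 1 < k := by omega
      simp [*] at *
      split_ifs <;> linarith
  have hrk : (r : ℝ) + 1 ≤ k := by exact_mod_cast r.2
  have := abs_le.1 hr
  rw [abs_le]
  have hr0 : (0 : ℝ) ≤ r := by positivity
  constructor <;> linarith

open Polynomial in
theorem root_sum (k : ℕ) (z : Fin k → ℝ) (hz : Function.Injective z)
    (P : ℝ[X]) (hP : P = ∏ i, (X - C (z i)))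
    (ode : X * derivative (derivative P) + (1 - X) * derivative P + (k : ℝ[X]) * P = 0)
    (i : Fin k) : 2 * z i * ∑ j, 1 / (z i - z j) = z i - 1 := by
  set Q : ℝ[X] := ∏ j ∈ Finset.univ.erase i, (X - C (z j)) with hQ
  have hPQ : P = (X - C (z i)) * Q := by
    rw [hP, hQ]
    exact (Finset.mul_prod_erase Finset.univ (fun j => X - C (z j)) (Finset.mem_univ i)).symm
  have hQ0 : Q.eval (z i) ≠ 0 := by
    rw [hQ, eval_prod, Finset.prod_ne_zero_iff]
    intro j hj
    simp only [eval_sub, eval_X, eval_C, sub_ne_zero]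
    exact fun h => (Finset.ne_of_mem_erase hj) (hz h).symm
  have hQ' : (derivative Q).eval (z i) = Q.eval (z i) * ∑ j, 1 / (z i - z j) := by
    rw [hQ, derivative_prod_finset, eval_finsetSum]
    have : ∑ j, 1 / (z i - z j) = ∑ j ∈ Finset.univ.erase i, 1 / (z i - z j) := by
      rw [Finset.sum_erase]; simp
    rw [this, Finset.mul_sum]
    refine Finset.sum_congr rfl fun j hj => ?_
    have hne : z i - z j ≠ 0 :=
      sub_ne_zero.2 fun h => (Finset.ne_of_mem_erase hj) (hz h).symm
    rw [← Finset.mul_prod_erase _ _ hj]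
    simp only [eval_mul, eval_sub, eval_X, eval_C, derivative_sub, derivative_X, derivative_C,
      sub_zero, eval_one]
    field_simp
  have h := congrArg (eval (z i)) ode
  rw [hPQ] at h
  simp only [derivative_mul, derivative_sub, derivative_X, derivative_C, derivative_add, eval_mul,
    eval_add, eval_sub, eval_X, eval_C, eval_one, eval_zero, sub_self, zero_mul, mul_zero,
    sub_zero, one_mul, add_zero] at h
  rw [hQ'] at h
  apply mul_left_cancel₀ hQ0
  linear_combination h

theorem power_rec (k : ℕ) (z : Fin k → ℝ) (hz : Function.Injective z)
    (h : ∀ i, 2 * z i * ∑ j, 1 / (z i - z j) = z i - 1) (m : ℕ) :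
    ∑ i, z i ^ (m + 1) = ∑ a ∈ Finset.range (m + 1), (∑ i, z i ^ a) * (∑ i, z i ^ (m - a))
      - m * ∑ i, z i ^ m := by
  have h1 : ∑ i, z i ^ (m + 1) - ∑ i, z i ^ m =
      2 * ∑ i, ∑ j, z i ^ (m + 1) / (z i - z j) := by
    rw [← Finset.sum_sub_distrib, Finset.mul_sum]
    refine Finset.sum_congr rfl fun i _ => ?_
    have e : ∑ j, z i ^ (m + 1) / (z i - z j) = z i ^ (m + 1) * ∑ j, 1 / (z i - z j) := by
      rw [Finset.mul_sum]; exact Finset.sum_congr rfl fun j _ => by ring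
    rw [e]
    linear_combination - z i ^ m * h i
  have h2 : 2 * ∑ i, ∑ j, z i ^ (m + 1) / (z i - z j) =
      ∑ i, ∑ j, (z i ^ (m + 1) - z j ^ (m + 1)) / (z i - z j) := by
    have e : ∑ i, ∑ j, z i ^ (m + 1) / (z i - z j) =
        ∑ i, ∑ j, z j ^ (m + 1) / (z j - z i) := Finset.sum_comm
    rw [two_mul]
    nth_rewrite 2 [e]
    rw [← Finset.sum_add_distrib]
    refine Finset.sum_congr rfl fun i _ => ?_
    rw [← Finset.sum_add_distrib]
    refine Finset.sum_congr rfl fun j _ => ?_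
    rw [← neg_sub (z i) (z j), div_neg]; ring
  have h3 : ∀ i j, (z i ^ (m + 1) - z j ^ (m + 1)) / (z i - z j) =
      ∑ a ∈ Finset.range (m + 1), z i ^ a * z j ^ (m - a)
        - if i = j then ((m : ℝ) + 1) * z i ^ m else 0 := by
    intro i j
    by_cases hij : i = j
    · subst hij
      have : ∀ a ∈ Finset.range (m + 1), z i ^ a * z i ^ (m - a) = z i ^ m := by
        intro a ha
        rw [← pow_add]; congr 1
        have := Finset.mem_range.1 ha
        omega
      rw [Finset.sum_congr rfl this]
      simp
    · have hne : z i - z j ≠ 0 := sub_ne_zero.2 fun h => hij (hz h)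
      rw [← geom_sum₂_mul, mul_div_cancel_right₀ _ hne]
      simp [hij]
  have h4 : ∑ i, ∑ j, (z i ^ (m + 1) - z j ^ (m + 1)) / (z i - z j) =
      ∑ a ∈ Finset.range (m + 1), (∑ i, z i ^ a) * (∑ i, z i ^ (m - a))
        - (m + 1) * ∑ i, z i ^ m := by
    simp only [h3, Finset.sum_sub_distrib, Finset.sum_ite_eq, Finset.mem_univ, if_true,
      ← Finset.mul_sum]
    congr 1
    simp only [Finset.sum_mul_sum]
    rw [Finset.sum_comm (s := Finset.range (m + 1))]
    refine Finset.sum_congr rfl fun i _ => ?_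
    rw [Finset.sum_comm]
  linarith

/-- normalized moments -/
def lagMom (m k : ℕ) : ℝ := (1 / (k : ℝ)) * ∑ i : Fin k, (lagEig k i / k) ^ m

theorem lagMom_rec (m k : ℕ) (hk : 0 < k) : lagMom (m + 1) k =
    ∑ a ∈ Finset.range (m + 1), lagMom a k * lagMom (m - a) k - (m / k) * lagMom m k := by
  have hk' : (k : ℝ) ≠ 0 := by positivity
  have e : ∀ m, lagMom m k = (∑ i, lagEig k i ^ m) / (k : ℝ) ^ (m + 1) := by
    intro m
    simp only [lagMom, div_pow, ← Finset.sum_div]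
    field_simp
    ring
  have h := power_rec k (lagEig k) (lagEig_inj k)
    (root_sum k (lagEig k) (lagEig_inj k) (lagP k) (lagP_eq_prod k) (lagP_ode k)) m
  have hs : ∑ a ∈ Finset.range (m + 1), lagMom a k * lagMom (m - a) k =
      (∑ a ∈ Finset.range (m + 1), (∑ i, lagEig k i ^ a) * (∑ i, lagEig k i ^ (m - a)))
        / (k : ℝ) ^ (m + 2) := by
    rw [Finset.sum_div]
    refine Finset.sum_congr rfl fun a ha => ?_
    have ha := Finset.mem_range.1 ha
    rw [e, e, div_mul_div_comm, ← pow_add]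
    congr 2
    omega
  rw [hs, e, e, h]
  field_simp
  ring

theorem lagMom_tendsto (m : ℕ) : Tendsto (lagMom m) atTop (nhds (catalan m : ℝ)) := by
  induction m using Nat.strong_induction_on with
  | _ m ih =>
    rcases m with _ | m
    · refine tendsto_const_nhds.congr' ?_
      filter_upwards [eventually_gt_atTop 0] with k hk
      have hk' : (k : ℝ) ≠ 0 := by positivity
      simp [lagMom, hk']
    · have h1 : Tendsto (fun k => ∑ a ∈ Finset.range (m + 1), lagMom a k * lagMom (m - a) k
          - (m / (k : ℝ)) * lagMom m k) atTop
          (nhds (∑ a ∈ Finset.range (m + 1), (catalan a : ℝ) * catalan (m - a)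
            - 0 * catalan m)) := by
        refine Tendsto.sub (tendsto_finsetSum _ fun a ha => ?_) ?_
        · have ha := Finset.mem_range.1 ha
          exact (ih a (by omega)).mul (ih (m - a) (by omega))
        · exact (tendsto_const_div_atTop_nhds_zero_nat _).mul (ih m (by omega))
      have h2 : (catalan (m + 1) : ℝ) =
          ∑ a ∈ Finset.range (m + 1), (catalan a : ℝ) * catalan (m - a) - 0 * catalan m := by
        rw [catalan_succ, Finset.sum_range]
        push_cast
        simp
      rw [h2]
      refine h1.congr' ?_
      filter_upwards [eventually_gt_atTop 0] with k hk
      rw [lagMom_rec m k hk]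

/-- Marchenko–Pastur functional in trigonometric form -/
def mpI (φ : ℝ → ℝ) : ℝ :=
  (4 / Real.pi) * ∫ t in (0 : ℝ)..(Real.pi / 2), φ (4 * Real.sin t ^ 2) * Real.cos t ^ 2

theorem mp_eq (φ : ℝ → ℝ) :
    (1 / (2 * Real.pi)) * ∫ x in (0 : ℝ)..4, φ x * (Real.sqrt (4 * x - x ^ 2) / x) = mpI φ := by
  have hpi := Real.pi_pos
  set s := Set.Ioo (0 : ℝ) (Real.pi / 2)
  have hsin : ∀ t ∈ s, 0 < Real.sin t := fun t ht =>
    Real.sin_pos_of_pos_of_lt_pi ht.1 (by linarith [ht.2])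
  have hcos : ∀ t ∈ s, 0 < Real.cos t := fun t ht =>
    Real.cos_pos_of_mem_Ioo ⟨by linarith [ht.1], ht.2⟩
  have himg : (fun t => 4 * Real.sin t ^ 2) '' s = Set.Ioo (0 : ℝ) 4 := by
    ext x
    constructor
    · rintro ⟨t, ht, rfl⟩
      have h1 := hsin t ht
      have h2 := hcos t ht
      have h3 := Real.sin_sq_add_cos_sq t
      constructor
      · simp only; positivity
      · simp only; nlinarith
    · rintro ⟨h0, h4⟩
      have hq0 : 0 < Real.sqrt (x / 4) := Real.sqrt_pos.2 (by linarith)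
      have hq1 : Real.sqrt (x / 4) < 1 := by
        rw [Real.sqrt_lt' one_pos]; linarith
      refine ⟨Real.arcsin (Real.sqrt (x / 4)), ⟨Real.arcsin_pos.2 hq0, ?_⟩, ?_⟩
      · exact Real.arcsin_lt_pi_div_two.2 hq1
      · simp only
        rw [Real.sin_arcsin (by linarith) hq1.le, Real.sq_sqrt (by linarith)]
        ring
  have hinj : Set.InjOn (fun t => 4 * Real.sin t ^ 2) s := by
    intro x hx y hy hxy
    simp only at hxy
    have h1 : Real.sin x = Real.sin y := by
      have := hsin x hx
      have := hsin y hy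
      nlinarith
    exact Real.injOn_sin ⟨by linarith [hx.1], hx.2.le⟩ ⟨by linarith [hy.1], hy.2.le⟩ h1
  have hder : ∀ t ∈ s, HasDerivWithinAt (fun t => 4 * Real.sin t ^ 2)
      (8 * Real.sin t * Real.cos t) s t := by
    intro t _
    have := (((Real.hasDerivAt_sin t).pow 2).const_mul 4).hasDerivWithinAt (s := s)
    convert! this using 1
    simp; ring
  have key := integral_image_eq_integral_abs_deriv_smul measurableSet_Ioo hder hinj
    (fun x => φ x * (Real.sqrt (4 * x - x ^ 2) / x))
  rw [himg] at key
  rw [mpI, intervalIntegral.integral_of_le (by norm_num), integral_Ioc_eq_integral_Ioo, key,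
    intervalIntegral.integral_of_le (by positivity), integral_Ioc_eq_integral_Ioo]
  have : ∀ t ∈ s, |8 * Real.sin t * Real.cos t| • (φ (4 * Real.sin t ^ 2) *
      (Real.sqrt (4 * (4 * Real.sin t ^ 2) - (4 * Real.sin t ^ 2) ^ 2) / (4 * Real.sin t ^ 2)))
      = 8 * (φ (4 * Real.sin t ^ 2) * Real.cos t ^ 2) := by
    intro t ht
    have h1 := hsin t ht
    have h2 := hcos t ht
    have e : 4 * (4 * Real.sin t ^ 2) - (4 * Real.sin t ^ 2) ^ 2 =
        (4 * Real.sin t * Real.cos t) ^ 2 := by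
      linear_combination (-16 * Real.sin t ^ 2) * Real.sin_sq_add_cos_sq t
    rw [e, Real.sqrt_sq (by positivity), abs_of_pos (by positivity), smul_eq_mul]
    field_simp
  rw [setIntegral_congr_fun measurableSet_Ioo this, integral_const_mul]
  field_simp
  ring

theorem sin_even (n : ℕ) :
    4 ^ n * ∫ t in (0 : ℝ)..(Real.pi / 2), Real.sin t ^ (2 * n) =
      (Real.pi / 2) * n.centralBinom := by
  induction n with
  | zero => simp
  | succ n ih =>
    rw [show 2 * (n + 1) = 2 * n + 2 by ring, integral_sin_pow]
    have h := Nat.succ_mul_centralBinom_succ n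
    have h' : ((n : ℝ) + 1) * (n + 1).centralBinom = 2 * (2 * n + 1) * n.centralBinom := by
      exact_mod_cast h
    simp only [Real.sin_zero, Real.cos_pi_div_two]
    push_cast
    rw [zero_pow (by omega)]
    have hn : (n : ℝ) + 1 ≠ 0 := by positivity
    apply mul_left_cancel₀ hn
    have e : (n + 1 : ℝ) * (4 ^ (n + 1) * ((0 * Real.cos 0 - Real.sin (Real.pi / 2) ^ (2 * n + 1) * 0) / (2 * n + 2)
        + (2 * n + 1) / (2 * n + 2) * ∫ t in (0 : ℝ)..(Real.pi / 2), Real.sin t ^ (2 * n))) =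
        2 * (2 * n + 1) * (4 ^ n * ∫ t in (0 : ℝ)..(Real.pi / 2), Real.sin t ^ (2 * n)) := by
      have : (2 * n + 2 : ℝ) ≠ 0 := by positivity
      field_simp
      ring
    rw [e, ih]
    linear_combination - (Real.pi / 2) * h'

theorem mpI_pow (n : ℕ) : mpI (fun x => x ^ n) = catalan n := by
  have hpi := Real.pi_pos
  have hc : ((n : ℝ) + 1) * catalan n = n.centralBinom := by
    exact_mod_cast succ_mul_catalan_eq_centralBinom n
  have h1 := sin_even n
  have h2 := sin_even (n + 1)
  have h3 : ((n : ℝ) + 1) * (n + 1).centralBinom = 2 * (2 * n + 1) * n.centralBinom := by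
    exact_mod_cast Nat.succ_mul_centralBinom_succ n
  have e : ∫ t in (0 : ℝ)..(Real.pi / 2), (4 * Real.sin t ^ 2) ^ n * Real.cos t ^ 2 =
      4 ^ n * ((∫ t in (0 : ℝ)..(Real.pi / 2), Real.sin t ^ (2 * n))
        - ∫ t in (0 : ℝ)..(Real.pi / 2), Real.sin t ^ (2 * (n + 1))) := by
    rw [← intervalIntegral.integral_sub, ← intervalIntegral.integral_const_mul]
    · congr 1
      ext t
      rw [Real.cos_sq', mul_pow, ← pow_mul]
      ring
    · exact (by fun_prop : Continuous fun t => Real.sin t ^ (2 * n)).intervalIntegrable _ _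
    · exact (by fun_prop : Continuous fun t => Real.sin t ^ (2 * (n + 1))).intervalIntegrable _ _
  rw [mpI, e]
  have hn : (n : ℝ) + 1 ≠ 0 := by positivity
  apply mul_left_cancel₀ hn
  rw [hc]
  field_simp
  rw [pow_succ] at h2
  have h2' : 4 ^ n * ∫ t in (0 : ℝ)..(Real.pi / 2), Real.sin t ^ (2 * (n + 1)) =
    (Real.pi / 8) * (n + 1).centralBinom := by linarith
  linear_combination 4 * (n + 1 : ℝ) * h1 - 4 * (n + 1 : ℝ) * h2' - (Real.pi / 2) * h3

theorem mpI_intble (φ : ℝ → ℝ) (h : Continuous φ) : IntervalIntegrable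
    (fun t => φ (4 * Real.sin t ^ 2) * Real.cos t ^ 2) volume 0 (Real.pi / 2) :=
  (by fun_prop : Continuous fun t => φ (4 * Real.sin t ^ 2) * Real.cos t ^ 2).intervalIntegrable _ _

theorem mpI_add (f g : ℝ → ℝ) (hf : Continuous f) (hg : Continuous g) :
    mpI (fun x => f x + g x) = mpI f + mpI g := by
  simp only [mpI, add_mul]
  rw [intervalIntegral.integral_add (mpI_intble f hf) (mpI_intble g hg)]
  ring

theorem mpI_smul (c : ℝ) (f : ℝ → ℝ) : mpI (fun x => c * f x) = c * mpI f := by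
  simp only [mpI, mul_assoc, intervalIntegral.integral_const_mul]
  ring

theorem mpI_mono (f g : ℝ → ℝ) (hf : Continuous f) (hg : Continuous g)
    (h : ∀ x ∈ Set.Icc (-4 : ℝ) 4, f x ≤ g x) : mpI f ≤ mpI g := by
  have hpi := Real.pi_pos
  refine mul_le_mul_of_nonneg_left ?_ (by positivity)
  refine intervalIntegral.integral_mono_on (by positivity) (mpI_intble f hf) (mpI_intble g hg) ?_
  intro t _
  refine mul_le_mul_of_nonneg_right (h _ ⟨?_, ?_⟩) (by positivity)
  · nlinarith [sq_nonneg (Real.sin t)]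
  · nlinarith [Real.sin_sq_le_one t]

theorem mp_poly (p : Polynomial ℝ) : Tendsto
    (fun k : ℕ => (1 / (k : ℝ)) * ∑ i : Fin k, p.eval (lagEig k i / k)) atTop
    (nhds (mpI fun x => p.eval x)) := by
  induction p using Polynomial.induction_on' with
  | add p q hp hq =>
    simp only [Polynomial.eval_add, Finset.sum_add_distrib, mul_add]
    rw [mpI_add _ _ p.continuous q.continuous]
    exact hp.add hq
  | monomial n a =>
    simp only [Polynomial.eval_monomial, ← Finset.mul_sum]
    rw [mpI_smul, mpI_pow]
    refine ((lagMom_tendsto n).const_mul a).congr fun k => ?_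
    rw [lagMom]; ring

/-- the contracted zeros of Laguerre polynomials (eigenvalues of the Jacobi
matrix with diagonal `2j−1` and off-diagonal `j`) follow the Marchenko–Pastur law. -/
theorem laguerre_zeros_marchenko_pastur (φ : ℝ → ℝ) (hφc : Continuous φ)
    (hφb : ∃ C : ℝ, ∀ x, |φ x| ≤ C) :
    Filter.Tendsto
      (fun k : ℕ =>
        (1 / (k : ℝ)) * ∑ j : Fin k,
          φ (((jacobiMatrix_isHermitian k (fun i => 2 * (i : ℝ) + 1)
                (fun i => (i : ℝ) + 1)).eigenvalues j) / (k : ℝ)))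
      Filter.atTop
      (nhds ((1 / (2 * Real.pi)) *
        ∫ x in (0 : ℝ)..4, φ x * (Real.sqrt (4 * x - x ^ 2) / x))) := by
  rw [mp_eq]
  rw [Metric.tendsto_atTop]
  intro ε hε
  obtain ⟨p, hp⟩ := exists_polynomial_near_of_continuousOn (-4) 4 φ hφc.continuousOn (ε / 3)
    (by positivity)
  obtain ⟨N, hN⟩ := Metric.tendsto_atTop.1 (mp_poly p) (ε / 3) (by positivity)
  refine ⟨max N 1, fun k hk => ?_⟩
  have hkN : N ≤ k := le_trans (le_max_left _ _) hk
  have hk1 : 1 ≤ k := le_trans (le_max_right _ _) hk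
  have hk0 : (0 : ℝ) < k := by exact_mod_cast hk1
  have h1 := hN k hkN
  have hone : mpI (fun _ => (1 : ℝ)) = 1 := by simpa using mpI_pow 0
  have hc : mpI (fun _ => ε / 3) = ε / 3 := by
    have := mpI_smul (ε / 3) (fun _ => 1)
    simpa [hone] using this
  have u1 : mpI φ ≤ mpI (fun x => p.eval x) + ε / 3 := by
    rw [← hc, ← mpI_add _ _ p.continuous continuous_const]
    refine mpI_mono _ _ hφc (p.continuous.add continuous_const) fun x hx => ?_
    linarith [(abs_lt.1 (hp x hx)).1]
  have u2 : mpI (fun x => p.eval x) ≤ mpI φ + ε / 3 := by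
    rw [← hc, ← mpI_add _ _ hφc continuous_const]
    refine mpI_mono _ _ p.continuous (hφc.add continuous_const) fun x hx => ?_
    linarith [(abs_lt.1 (hp x hx)).2]
  have hmem : ∀ i : Fin k, lagEig k i / k ∈ Set.Icc (-4 : ℝ) 4 := by
    intro i
    have := abs_le.1 (lagEig_bound k i)
    constructor
    · rw [le_div_iff₀ hk0]; linarith
    · rw [div_le_iff₀ hk0]; linarith
  have h2 : |(1 / (k : ℝ)) * ∑ i : Fin k, p.eval (lagEig k i / k)
      - (1 / (k : ℝ)) * ∑ i : Fin k, φ (lagEig k i / k)| ≤ ε / 3 := by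
    rw [← mul_sub, ← Finset.sum_sub_distrib, abs_mul, abs_of_pos (by positivity)]
    have : |∑ i : Fin k, (p.eval (lagEig k i / k) - φ (lagEig k i / k))| ≤ k * (ε / 3) := by
      refine (Finset.abs_sum_le_sum_abs _ _).trans ?_
      refine (Finset.sum_le_sum fun i _ => (hp _ (hmem i)).le).trans ?_
      simp
    rw [one_div, inv_mul_le_iff₀ hk0]
    exact this
  rw [Real.dist_eq] at h1 ⊢
  change |(1 / (k : ℝ)) * ∑ i : Fin k, φ (lagEig k i / k) - mpI φ| < ε
  have a1 := abs_lt.1 h1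
  have a2 := abs_le.1 h2
  rw [abs_lt]
  constructor <;> linarith
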